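/- In 𝔽₂[t₁,…,t₆], let Q be the product of ∏_{1≤j<k≤6}(1 + t_j + t_k) and ∏_{|S|=4, S⊆{1,…,6}}(1 + Σ_{i∈S} t_i). Then the homogeneous component of Q of degree 16 is congruent to e₃²e₅² + e₄⁴ + e₂⁸ modulo the ideal generated by e₁. -/

import Mathlib

open MvPolynomial Finset

/-- The `i`-th elementary symmetric polynomial in `𝔽₂[t₁,…,t₆]`. -/
noncomputable def e (i : ℕ) : MvPolynomial (Fin 6) (ZMod 2) :=
  esymm (Fin 6) (ZMod 2) i

/-- `Q`: the product of `∏_{1≤j<k≤6}(1 + t_j + t_k)` and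
`∏_{|S|=4}(1 + Σ_{i∈S} t_i)` in `𝔽₂[t₁,…,t₆]`, representing the mod 2 total
Chern class of `2 ⊕ λ² ⊕ λ⁴ = r̃₆*((Δ₁₂⁺)_ℂ)` of `SU(6)`. -/
noncomputable def Q : MvPolynomial (Fin 6) (ZMod 2) :=
  (∏ p ∈ univ.filter (fun p : Fin 6 × Fin 6 => p.1 < p.2), (1 + X p.1 + X p.2)) *
  ∏ s ∈ (univ : Finset (Fin 6)).powersetCard 4, (1 + ∑ i ∈ s, X i)

section General
variable {R : Type*} [CommRing R] [CharP R 2]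

/-- The product of the four mixed factors `1 + x + y`, `x ∈ {a,b}`, `y ∈ {c,d}`. -/
lemma mixed_factors (a b c d s : R) (hs : s = a + b + c + d) :
    (1+a+c)*(1+a+d)*(1+b+c)*(1+b+d) =
      1 + ((a+b)^2+(a+b)*(c+d)+(c+d)^2) + (a+b)*(c+d)*s
        + ((a*b+c*d)^2 + s*(a+b)*(a*b+c*d)+s^2*(a*b)) := by
  subst hs
  grind

/-- The degree 8 component of the total Chern class of `λ²`. -/
lemma degree_eight (s1 s2 s3 p1 p2 p3 S r12 r13 r23 e2 e3 e4 e5 : R)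
    (hs : s3 = s1 + s2) (hS : S = s1^2+s1*s2+s2^2)
    (h12 : r12 = (p1+p2)^2 + s3*s1*(p1+p2)+s3^2*p1)
    (h13 : r13 = (p1+p3)^2 + s2*s1*(p1+p3)+s2^2*p1)
    (h23 : r23 = (p2+p3)^2 + s1*s2*(p2+p3)+s1^2*p2)
    (h2 : e2 = p1+p2+p3+s1*s2+s1*s3+s2*s3)
    (h3 : e3 = p1*(s2+s3)+p2*(s1+s3)+p3*(s1+s2)+s1*s2*s3)
    (h4 : e4 = p1*p2+p1*p3+p2*p3+p1*s2*s3+p2*s1*s3+p3*s1*s2)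
    (h5 : e5 = p1*p2*s3+p1*p3*s2+p2*p3*s1) :
    S^4+S^2*(r12+r13+r23)+(r12*r13+r12*r23+r13*r23) = e3*e5+e4^2+e2^4 := by
  subst h2 h3 h4 h5 h12 h13 h23 hS hs
  grind

/-- Expansion of the square of the total class into homogeneous pieces. -/
lemma square_expand (S P x y z r1 r2 r3 : R) (h1 : r1 = x + y + z)
    (h2 : r2 = x*y+x*z+y*z) (h3 : r3 = x*y*z) :
    ((1+S+P)*((1+S+P+x)*(1+S+P+y)*(1+S+P+z)))^2 =
      (S^4+S^2*r1+r2)^2 +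
      (1 + P^8 + r1^2 + S^2*r1^2 + P^2*r1^2 + S^6*r1^2 + P^2*S^4*r1^2 + P^4*r1^2
        + S^2*P^4*r1^2 + P^6*r1^2 + S^4*r2^2 + P^4*r2^2 + r3^2 + S^2*r3^2 + P^2*r3^2) := by
  have h : (1+S+P)*((1+S+P+x)*(1+S+P+y)*(1+S+P+z)) =
      (1+S+P)^4 + (1+S+P)^3*r1 + (1+S+P)^2*r2 + (1+S+P)*r3 := by
    subst h1 h2 h3; ring
  rw [h]
  clear h h1 h2 h3
  grind

/-- The 30 linear factors, in a ring where `t₁+⋯+t₆ = 0`. -/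
lemma total_class (a b c d g h s1 s2 s3 S P r12 r13 r23 : R) (hh : h = a+b+c+d+g)
    (hs1 : s1 = a + b) (hs2 : s2 = c + d) (hs3 : s3 = g + h)
    (hS : S = s1^2+s1*s2+s2^2) (hP : P = s1*s2*s3)
    (h12 : r12 = (a*b+c*d)^2 + s3*s1*(a*b+c*d)+s3^2*(a*b))
    (h13 : r13 = (a*b+g*h)^2 + s2*s1*(a*b+g*h)+s2^2*(a*b))
    (h23 : r23 = (c*d+g*h)^2 + s1*s2*(c*d+g*h)+s1^2*(c*d)) :
    (((1+a+b)*((1+a+c)*((1+a+d)*((1+a+g)*(1+a+h))))) *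
      (((1+b+c)*((1+b+d)*((1+b+g)*(1+b+h)))) *
      (((1+c+d)*((1+c+g)*(1+c+h))) *
      (((1+d+g)*(1+d+h)) * (1+g+h)))))
     * ((1+(a+(b+(c+d))))*((1+(a+(b+(c+g))))*((1+(a+(b+(c+h))))*((1+(a+(b+(d+g))))*
       ((1+(a+(b+(d+h))))*((1+(a+(b+(g+h))))*((1+(a+(c+(d+g))))*((1+(a+(c+(d+h))))*
       ((1+(a+(c+(g+h))))*((1+(a+(d+(g+h))))*((1+(b+(c+(d+g))))*((1+(b+(c+(d+h))))*
       ((1+(b+(c+(g+h))))*((1+(b+(d+(g+h))))*(1+(c+(d+(g+h))))))))))))))))))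
    = ((1+S+P)*((1+S+P+r12)*(1+S+P+r13)*(1+S+P+r23)))^2 := by
  have k1 : 1+(a+(b+(c+d))) = 1+g+h := by grind
  have k2 : 1+(a+(b+(c+g))) = 1+d+h := by grind
  have k3 : 1+(a+(b+(c+h))) = 1+d+g := by grind
  have k4 : 1+(a+(b+(d+g))) = 1+c+h := by grind
  have k5 : 1+(a+(b+(d+h))) = 1+c+g := by grind
  have k6 : 1+(a+(b+(g+h))) = 1+c+d := by grind
  have k7 : 1+(a+(c+(d+g))) = 1+b+h := by grind
  have k8 : 1+(a+(c+(d+h))) = 1+b+g := by grind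
  have k9 : 1+(a+(c+(g+h))) = 1+b+d := by grind
  have k10 : 1+(a+(d+(g+h))) = 1+b+c := by grind
  have k11 : 1+(b+(c+(d+g))) = 1+a+h := by grind
  have k12 : 1+(b+(c+(d+h))) = 1+a+g := by grind
  have k13 : 1+(b+(c+(g+h))) = 1+a+d := by grind
  have k14 : 1+(b+(d+(g+h))) = 1+a+c := by grind
  have k15 : 1+(c+(d+(g+h))) = 1+a+b := by grind
  rw [k1, k2, k3, k4, k5, k6, k7, k8, k9, k10, k11, k12, k13, k14, k15]
  have m12 : (1+a+c)*(1+a+d)*(1+b+c)*(1+b+d) = 1+S+P+r12 := by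
    rw [mixed_factors a b c d s3 (by grind)]; subst hS hP h12 hs1 hs2; ring
  have m13 : (1+a+g)*(1+a+h)*(1+b+g)*(1+b+h) = 1+S+P+r13 := by
    have : s3 = s1 + s2 := by grind
    rw [mixed_factors a b g h s2 (by grind), ← hs3, ← hs1, h13, hP, hS, this]
    clear * -
    grind
  have m23 : (1+c+g)*(1+c+h)*(1+d+g)*(1+d+h) = 1+S+P+r23 := by
    have : s3 = s1 + s2 := by grind
    rw [mixed_factors c d g h s1 (by grind), ← hs3, ← hs2, h23, hP, hS, this]
    clear * -
    grind
  have m0 : (1+a+b)*(1+c+d)*(1+g+h) = 1+S+P := by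
    have h3 : s3 = s1 + s2 := by grind
    have : (1+a+b)*(1+c+d)*(1+g+h) = (1+s1)*(1+s2)*(1+s3) := by subst hs1 hs2 hs3; ring
    rw [this, hP, hS, h3]
    clear * -
    grind
  rw [← m12, ← m13, ← m23, ← m0]
  clear * -
  generalize 1+a+b = fab, 1+a+c = fac, 1+a+d = fad, 1+a+g = fag, 1+a+h = fah, 1+b+c = fbc, 1+b+d = fbd, 1+b+g = fbg,
    1+b+h = fbh, 1+c+d = fcd, 1+c+g = fcg, 1+c+h = fch, 1+d+g = fdg, 1+d+h = fdh, 1+g+h = fgh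
  ring

end General

abbrev MP := MvPolynomial (Fin 6) (ZMod 2)

lemma e_eq (k : ℕ) : e k = (X 0 ::ₘ X 1 ::ₘ X 2 ::ₘ X 3 ::ₘ X 4 ::ₘ X 5 ::ₘ
    (0 : Multiset MP)).esymm k := by
  rw [e, esymm_eq_multiset_esymm]; rfl

lemma e1_eq : e 1 = X 0 + X 1 + X 2 + X 3 + X 4 + X 5 := by
  simp [e, Fin.sum_univ_succ]; ring_nf

lemma pc : (univ : Finset (Fin 6)).powersetCard 4 =
    {{0,1,2,3},{0,1,2,4},{0,1,2,5},{0,1,3,4},{0,1,3,5},{0,1,4,5},{0,2,3,4},{0,2,3,5},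
      {0,2,4,5},{0,3,4,5},{1,2,3,4},{1,2,3,5},{1,2,4,5},{1,3,4,5},{2,3,4,5}} := by
  decide

lemma prod_pairs {R : Type*} [CommRing R] (t : Fin 6 → R) :
    ∏ p ∈ univ.filter (fun p : Fin 6 × Fin 6 => p.1 < p.2), (1 + t p.1 + t p.2) =
    ((1+t 0+t 1)*((1+t 0+t 2)*((1+t 0+t 3)*((1+t 0+t 4)*(1+t 0+t 5))))) *
      (((1+t 1+t 2)*((1+t 1+t 3)*((1+t 1+t 4)*(1+t 1+t 5)))) *
      (((1+t 2+t 3)*((1+t 2+t 4)*(1+t 2+t 5))) *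
      (((1+t 3+t 4)*(1+t 3+t 5)) * (1+t 4+t 5)))) := by
  simp [Finset.prod_filter, Fintype.prod_prod_type, Fin.prod_univ_succ]

lemma prod_quads {R : Type*} [CommRing R] (t : Fin 6 → R) :
    ∏ s ∈ (univ : Finset (Fin 6)).powersetCard 4, (1 + ∑ i ∈ s, t i) =
     ((1+(t 0+(t 1+(t 2+t 3))))*((1+(t 0+(t 1+(t 2+t 4))))*((1+(t 0+(t 1+(t 2+t 5))))*
       ((1+(t 0+(t 1+(t 3+t 4))))*
       ((1+(t 0+(t 1+(t 3+t 5))))*((1+(t 0+(t 1+(t 4+t 5))))*((1+(t 0+(t 2+(t 3+t 4))))*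
       ((1+(t 0+(t 2+(t 3+t 5))))*
       ((1+(t 0+(t 2+(t 4+t 5))))*((1+(t 0+(t 3+(t 4+t 5))))*((1+(t 1+(t 2+(t 3+t 4))))*
       ((1+(t 1+(t 2+(t 3+t 5))))*
       ((1+(t 1+(t 2+(t 4+t 5))))*((1+(t 1+(t 3+(t 4+t 5))))*
       (1+(t 2+(t 3+(t 4+t 5)))))))))))))))))) := by
  rw [pc]
  repeat rw [Finset.prod_insert (by decide)]
  rw [Finset.prod_singleton]
  repeat rw [Finset.sum_insert (by decide)]
  simp only [Finset.sum_singleton]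

noncomputable abbrev I : Ideal MP := Ideal.span {e 1}

lemma I_hom (n : ℕ) {p : MP} (hp : p ∈ I) : homogeneousComponent n p ∈ I := by
  let _ := MvPolynomial.gradedAlgebra (σ := Fin 6) (R := ZMod 2)
  refine homogeneousComponent_mem_of_mem ?_ hp n
  refine Ideal.homogeneous_span _ _ ?_
  rintro x rfl
  refine ⟨1, ?_⟩
  have hX (i : Fin 6) : (X i : MP).IsHomogeneous 1 := isHomogeneous_X _ _
  rw [e1_eq]
  exact (((((hX 0).add (hX 1)).add (hX 2)).add (hX 3)).add (hX 4)).add (hX 5)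

lemma I_ne_top : I ≠ ⊤ := by
  intro h
  have h1 : (1 : MP) ∈ I := by rw [h]; trivial
  have h2 : I ≤ RingHom.ker (constantCoeff (σ := Fin 6) (R := ZMod 2)) := by
    rw [Ideal.span_le]
    rintro x rfl
    simp [e1_eq]
  simpa using h2 h1

instance : Nontrivial (MP ⧸ I) := Ideal.Quotient.nontrivial_iff.mpr I_ne_top

instance : CharP (MP ⧸ I) 2 :=
  charP_of_injective_algebraMap (algebraMap (ZMod 2) (MP ⧸ I)).injective 2

lemma comp_zero {n m : ℕ} {p : MP} (hp : p.IsHomogeneous m) (h : n ≠ m) :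
    homogeneousComponent n p = 0 := by
  rw [homogeneousComponent_of_mem hp, if_neg h]

theorem c16_spinrep_SU6 :
    homogeneousComponent 16 Q - (e 3 ^ 2 * e 5 ^ 2 + e 4 ^ 4 + e 2 ^ 8)
      ∈ Ideal.span {e 1} := by
  have hX (i : Fin 6) : (X i : MP).IsHomogeneous 1 := isHomogeneous_X _ _
  obtain ⟨s1, hs1⟩ : ∃ s : MP, s = X 0 + X 1 := ⟨_, rfl⟩
  obtain ⟨s2, hs2⟩ : ∃ s : MP, s = X 2 + X 3 := ⟨_, rfl⟩
  obtain ⟨s3, hs3⟩ : ∃ s : MP, s = X 4 + X 5 := ⟨_, rfl⟩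
  obtain ⟨S, hS⟩ : ∃ s : MP, s = s1^2+s1*s2+s2^2 := ⟨_, rfl⟩
  obtain ⟨P, hP⟩ : ∃ s : MP, s = s1*s2*s3 := ⟨_, rfl⟩
  obtain ⟨p1, hp1⟩ : ∃ s : MP, s = X 0 * X 1 := ⟨_, rfl⟩
  obtain ⟨p2, hp2⟩ : ∃ s : MP, s = X 2 * X 3 := ⟨_, rfl⟩
  obtain ⟨p3, hp3⟩ : ∃ s : MP, s = X 4 * X 5 := ⟨_, rfl⟩
  obtain ⟨x, hx⟩ : ∃ s : MP, s = (p1+p2)^2 + s3*s1*(p1+p2)+s3^2*p1 := ⟨_, rfl⟩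
  obtain ⟨y, hy⟩ : ∃ s : MP, s = (p1+p3)^2 + s2*s1*(p1+p3)+s2^2*p1 := ⟨_, rfl⟩
  obtain ⟨z, hz⟩ : ∃ s : MP, s = (p2+p3)^2 + s1*s2*(p2+p3)+s1^2*p2 := ⟨_, rfl⟩
  obtain ⟨r1, hr1⟩ : ∃ s : MP, s = x + y + z := ⟨_, rfl⟩
  obtain ⟨r2, hr2⟩ : ∃ s : MP, s = x*y+x*z+y*z := ⟨_, rfl⟩
  obtain ⟨r3, hr3⟩ : ∃ s : MP, s = x*y*z := ⟨_, rfl⟩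
  have ds1 : s1.IsHomogeneous 1 := hs1 ▸ (hX 0).add (hX 1)
  have ds2 : s2.IsHomogeneous 1 := hs2 ▸ (hX 2).add (hX 3)
  have ds3 : s3.IsHomogeneous 1 := hs3 ▸ (hX 4).add (hX 5)
  have dp1 : p1.IsHomogeneous 2 := hp1 ▸ (hX 0).mul (hX 1)
  have dp2 : p2.IsHomogeneous 2 := hp2 ▸ (hX 2).mul (hX 3)
  have dp3 : p3.IsHomogeneous 2 := hp3 ▸ (hX 4).mul (hX 5)
  have dS : S.IsHomogeneous 2 := hS ▸ ((ds1.pow 2).add (ds1.mul ds2)).add (ds2.pow 2)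
  have dP : P.IsHomogeneous 3 := hP ▸ (ds1.mul ds2).mul ds3
  have dx : x.IsHomogeneous 4 := hx ▸ (((dp1.add dp2).pow 2).add
    ((ds3.mul ds1).mul (dp1.add dp2))).add ((ds3.pow 2).mul dp1)
  have dy : y.IsHomogeneous 4 := hy ▸ (((dp1.add dp3).pow 2).add
    ((ds2.mul ds1).mul (dp1.add dp3))).add ((ds2.pow 2).mul dp1)
  have dz : z.IsHomogeneous 4 := hz ▸ (((dp2.add dp3).pow 2).add
    ((ds1.mul ds2).mul (dp2.add dp3))).add ((ds1.pow 2).mul dp2)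
  have dr1 : r1.IsHomogeneous 4 := hr1 ▸ (dx.add dy).add dz
  have dr2 : r2.IsHomogeneous 8 := hr2 ▸ ((dx.mul dy).add (dx.mul dz)).add (dy.mul dz)
  have dr3 : r3.IsHomogeneous 12 := hr3 ▸ (dx.mul dy).mul dz
  let φ := Ideal.Quotient.mk I
  have h6 : φ (X 5) = φ (X 0) + φ (X 1) + φ (X 2) + φ (X 3) + φ (X 4) := by
    have : φ (e 1) = 0 := Ideal.Quotient.eq_zero_iff_mem.mpr (Ideal.mem_span_singleton_self _)
    rw [e1_eq] at this
    simp only [map_add] at this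
    grind
  have hQ : Q - ((1+S+P)*((1+S+P+x)*(1+S+P+y)*(1+S+P+z)))^2 ∈ I := by
    rw [← Ideal.Quotient.eq_zero_iff_mem, map_sub, sub_eq_zero]
    have := total_class (φ (X 0)) (φ (X 1)) (φ (X 2)) (φ (X 3)) (φ (X 4)) (φ (X 5))
      (φ s1) (φ s2) (φ s3) (φ S) (φ P) (φ x) (φ y) (φ z) h6
      (by simp [hs1]) (by simp [hs2]) (by simp [hs3]) (by simp [hS]) (by simp [hP])
      (by simp [hx, hp1, hp2]) (by simp [hy, hp1, hp3]) (by simp [hz, hp2, hp3])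
    rw [Q, prod_pairs (fun i => (X i : MP)), prod_quads (fun i => (X i : MP))]
    simp only [map_mul, map_add, map_one, map_pow]
    exact this
  rw [square_expand S P x y z r1 r2 r3 hr1 hr2 hr3] at hQ
  have h16 := I_hom 16 hQ
  have d8 : ((S^4+S^2*r1+r2)^2).IsHomogeneous 16 :=
    (((dS.pow 4).add ((dS.pow 2).mul dr1)).add dr2).pow 2
  simp only [map_sub, map_add] at h16
  rw [homogeneousComponent_eq_self d8,
    comp_zero (isHomogeneous_one (Fin 6) (ZMod 2)) (by norm_num),
    comp_zero (dP.pow 8) (by norm_num),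
    comp_zero (dr1.pow 2) (by norm_num),
    comp_zero ((dS.pow 2).mul (dr1.pow 2)) (by norm_num),
    comp_zero ((dP.pow 2).mul (dr1.pow 2)) (by norm_num),
    comp_zero ((dS.pow 6).mul (dr1.pow 2)) (by norm_num),
    comp_zero (((dP.pow 2).mul (dS.pow 4)).mul (dr1.pow 2)) (by norm_num),
    comp_zero ((dP.pow 4).mul (dr1.pow 2)) (by norm_num),
    comp_zero (((dS.pow 2).mul (dP.pow 4)).mul (dr1.pow 2)) (by norm_num),
    comp_zero ((dP.pow 6).mul (dr1.pow 2)) (by norm_num),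
    comp_zero ((dS.pow 4).mul (dr2.pow 2)) (by norm_num),
    comp_zero ((dP.pow 4).mul (dr2.pow 2)) (by norm_num),
    comp_zero (dr3.pow 2) (by norm_num),
    comp_zero ((dS.pow 2).mul (dr3.pow 2)) (by norm_num),
    comp_zero ((dP.pow 2).mul (dr3.pow 2)) (by norm_num)] at h16
  simp only [add_zero] at h16
  have hfin : (S^4+S^2*r1+r2)^2 - (e 3 ^ 2 * e 5 ^ 2 + e 4 ^ 4 + e 2 ^ 8) ∈ I := by
    rw [← Ideal.Quotient.eq_zero_iff_mem, map_sub, sub_eq_zero]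
    have h2 : e 2 = p1+p2+p3+s1*s2+s1*s3+s2*s3 := by
      rw [e_eq]
      simp [Multiset.esymm, Multiset.powersetCard_cons, Multiset.powersetCard_one, hp1, hp2,
        hp3, hs1, hs2, hs3]
      ring
    have h3 : e 3 = p1*(s2+s3)+p2*(s1+s3)+p3*(s1+s2)+s1*s2*s3 := by
      rw [e_eq]
      simp [Multiset.esymm, Multiset.powersetCard_cons, Multiset.powersetCard_one, hp1, hp2,
        hp3, hs1, hs2, hs3]
      ring
    have h4 : e 4 = p1*p2+p1*p3+p2*p3+p1*s2*s3+p2*s1*s3+p3*s1*s2 := by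
      rw [e_eq]
      simp [Multiset.esymm, Multiset.powersetCard_cons, Multiset.powersetCard_one, hp1, hp2,
        hp3, hs1, hs2, hs3]
      ring
    have h5 : e 5 = p1*p2*s3+p1*p3*s2+p2*p3*s1 := by
      rw [e_eq]
      simp [Multiset.esymm, Multiset.powersetCard_cons, Multiset.powersetCard_one, hp1, hp2,
        hp3, hs1, hs2, hs3]
      ring
    have := degree_eight (φ s1) (φ s2) (φ s3) (φ p1) (φ p2) (φ p3) (φ S) (φ x) (φ y) (φ z)
      (φ (e 2)) (φ (e 3)) (φ (e 4)) (φ (e 5))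
      (by simp only [hs1, hs2, hs3, map_add]; grind) (by simp [hS])
      (by simp [hx]) (by simp [hy]) (by simp [hz]) (by simp [h2]) (by simp [h3])
      (by simp [h4]) (by simp [h5])
    have h8 : φ (S^4+S^2*r1+r2) = φ (e 3) * φ (e 5) + φ (e 4)^2 + φ (e 2)^4 := by
      rw [← this, hr1, hr2]; simp only [map_mul, map_add, map_pow]
    change φ _ = φ _
    rw [map_pow, h8]
    simp only [map_mul, map_add, map_pow]
    generalize φ (e 3) = a, φ (e 5) = b, φ (e 4) = c, φ (e 2) = d
    grind
  have := I.add_mem h16 hfin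
  rwa [sub_add_sub_cancel] at this
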